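/- arXiv:2006.11420 — 2 statements merged into one kernel-verified Lean document; each statement's English description precedes it below -/
import Mathlib

section
/- Let β = r/s be a rational number with r > s > 0 and gcd(r, s) = 1, and let F, G ∈ ℝ[X, Y] be β-quasihomogeneous polynomials of degree d ≥ 1 with height functions f₊, f₋ and g₊, g₋ respectively. Let e denote the common multiplicity of X as a factor of F and of G, and suppose e < d. Suppose there exist nonzero real numbers λ₁, λ₂ with λ₁λ₂ > 0 and bi-Lipschitz homeomorphisms φ₁, φ₂ : ℝ → ℝ such that: if λ₁ > 0 and λ₂ > 0 then |λ₁|^d·(g₊ ∘ φ₁) = f₊ and |λ₂|^d·(g₋ ∘ φ₂) = f₋, while if λ₁ < 0 and λ₂ < 0 then |λ₁|^d·(g₋ ∘ φ₁) = f₊ and |λ₂|^d·(g₊ ∘ φ₂) = f₋. If L₁, L₂ are real numbers with φᵢ(t)/t → Lᵢ as |t| → +∞ (i = 1, 2), then |λ₁|^{dβ/(d−e)}·|L₁| = |λ₂|^{dβ/(d−e)}·|L₂|. -/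
open Filter Topology

/-- Evaluation of a polynomial in two variables at the point `(x, y)`. -/
noncomputable def eval2 (F : MvPolynomial (Fin 2) ℝ) (x y : ℝ) : ℝ :=
  MvPolynomial.eval ![x, y] F

open Bornology MvPolynomial

/-!
The weight `(1, β)` pins each exponent of a monomial of `F` by the other, so `F(σ, ·)` has degree
`(d - e) / β` and leading coefficient `σ ^ e * a`, where `a` is the coefficient of the monomial of
`F` with the least exponent `e` of `X`. For `σ, τ = ±1`, comparing the leading terms of the two
sides of `|λ| ^ d * G(τ, φ t) = F(σ, t)` gives `|λ| ^ d * |L| ^ ((d - e) / β) = |a_F / a_G|`, which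
does not involve the signs `σ` and `τ`.
-/

section Support

variable {ι R : Type*}

theorem X_pow_dvd_iff_forall_mem_support [CommSemiring R] {i : ι} {k : ℕ} {F : MvPolynomial ι R} :
    X i ^ k ∣ F ↔ ∀ m ∈ F.support, k ≤ m i := by
  have h := mem_ideal_span_monomial_image (x := F) (s := {Finsupp.single i k})
  simpa only [Set.image_singleton, Ideal.mem_span_singleton, ← X_pow_eq_monomial,
    Set.mem_singleton_iff, exists_eq_left, Finsupp.single_le_iff] using h

theorem exists_mem_support_eq_of_emultiplicity_X_eq [CommSemiring R] {i : ι} {e : ℕ}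
    {F : MvPolynomial ι R} (hF : emultiplicity (X i) F = e) :
    ∃ m ∈ F.support, m i = e ∧ ∀ m' ∈ F.support, e ≤ m' i := by
  obtain ⟨hdvd, hndvd⟩ := emultiplicity_eq_coe.1 hF
  rw [X_pow_dvd_iff_forall_mem_support] at hdvd hndvd
  push Not at hndvd
  obtain ⟨m, hm, hlt⟩ := hndvd
  exact ⟨m, hm, (Nat.lt_succ_iff.1 hlt).antisymm (hdvd m hm), hdvd⟩

theorem coeff_bind₁_C_mul_X [CommSemiring R] (c : ι → R) (F : MvPolynomial ι R) (m : ι →₀ ℕ) :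
    coeff m (bind₁ (fun i => C (c i) * X i) F) = (m.prod fun i k => c i ^ k) * coeff m F := by
  classical
  induction F using MvPolynomial.induction_on' with
  | monomial m' a =>
    have hprod : bind₁ (fun i => C (c i) * X i) (monomial m' a) =
        monomial m' ((m'.prod fun i k => c i ^ k) * a) := by
      rw [bind₁_monomial, monomial_eq]
      simp only [mul_pow, Finset.prod_mul_distrib, Finsupp.prod, C_mul, map_prod, map_pow]
      ring
    rw [hprod, coeff_monomial, coeff_monomial]
    split_ifs with h
    · rw [h]
    · rw [mul_zero]
  | add p q hp hq => rw [map_add, coeff_add, hp, hq, coeff_add, mul_add]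

theorem isWeightedHomogeneous_of_eval_rpow_mul {w : ι → ℝ} {δ t : ℝ} (ht : 0 < t) (ht1 : t ≠ 1)
    {F : MvPolynomial ι ℝ}
    (hF : ∀ x : ι → ℝ, eval (fun i => t ^ w i * x i) F = t ^ δ * eval x F) :
    IsWeightedHomogeneous w F δ := by
  intro m hm
  have hscale : bind₁ (fun i => C (t ^ w i) * X i) F = C (t ^ δ) * F := by
    refine MvPolynomial.funext fun x => ?_
    rw [map_mul, eval_C, ← hF]
    simp [← aeval_eq_eval, aeval_bind₁]
  have hcoeff : t ^ Finsupp.weight w m * coeff m F = t ^ δ * coeff m F := by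
    rw [← coeff_C_mul m (t ^ δ) F, ← hscale, coeff_bind₁_C_mul_X, Finsupp.weight_apply, Finsupp.sum,
      Real.rpow_sum_of_pos ht, Finsupp.prod]
    simp only [nsmul_eq_mul, mul_comm (Nat.cast _), Real.rpow_mul_natCast ht.le]
  exact (Real.rpow_right_inj ht ht1).1 (mul_right_cancel₀ hm hcoeff)

end Support

section HeightPoly

variable {R : Type*} [CommSemiring R]

/-- The polynomial `F(σ, Y)` in the single variable `Y`; for `σ = 1` and `σ = -1` it represents the
height functions `f₊` and `f₋`. -/
noncomputable def heightPoly (F : MvPolynomial (Fin 2) R) (σ : R) : Polynomial R :=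
  aeval ![Polynomial.C σ, Polynomial.X] F

theorem eval_heightPoly (F : MvPolynomial (Fin 2) ℝ) (σ t : ℝ) :
    (heightPoly F σ).eval t = eval2 F σ t := by
  simp [heightPoly, eval2, aeval_def, eval₂_eq', eval_eq', Polynomial.eval_finsetSum]

theorem coeff_heightPoly (F : MvPolynomial (Fin 2) R) (σ : R) (n : ℕ) :
    (heightPoly F σ).coeff n = ∑ m ∈ F.support with m 1 = n, σ ^ m 0 * F.coeff m := by
  simp only [heightPoly, aeval_def, eval₂_eq', Fin.prod_univ_two, Matrix.cons_val_zero,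
    Matrix.cons_val_one, Polynomial.finsetSum_coeff, Polynomial.algebraMap_eq, Finset.sum_filter,
    Polynomial.coeff_C_mul, ← Polynomial.C_pow, Polynomial.coeff_X_pow, mul_ite, ite_mul,
    mul_one, mul_zero, zero_mul, mul_comm (coeff _ F), eq_comm (a := n)]

variable {β d : ℝ} {F : MvPolynomial (Fin 2) R}

theorem add_mul_eq_of_isWeightedHomogeneous (hF : IsWeightedHomogeneous ![1, β] F d)
    {m : Fin 2 →₀ ℕ} (hm : m ∈ F.support) : (m 0 : ℝ) + β * m 1 = d := by
  rw [← hF (mem_support_iff.1 hm), Finsupp.weight_apply, Finsupp.sum_fintype _ _ (by simp)]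
  simp [mul_comm]

theorem coeff_heightPoly_of_isWeightedHomogeneous (hF : IsWeightedHomogeneous ![1, β] F d)
    {m : Fin 2 →₀ ℕ} (hm : m ∈ F.support) (σ : R) :
    (heightPoly F σ).coeff (m 1) = σ ^ m 0 * F.coeff m := by
  rw [coeff_heightPoly, Finset.sum_eq_single_of_mem m (by simp [hm])]
  intro m' hm'1 hne
  obtain ⟨hm', h1⟩ := Finset.mem_filter.1 hm'1
  have h0 : (m' 0 : ℝ) = m 0 := by
    have h := add_mul_eq_of_isWeightedHomogeneous hF hm
    have h' := add_mul_eq_of_isWeightedHomogeneous hF hm'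
    rw [h1] at h'
    linarith
  refine absurd (Finsupp.ext fun i => ?_) hne
  fin_cases i
  exacts [Nat.cast_injective h0, h1]

theorem natDegree_heightPoly_le (hβ : 0 < β) (hF : IsWeightedHomogeneous ![1, β] F d)
    {m : Fin 2 →₀ ℕ} (hm : m ∈ F.support) (hmin : ∀ m' ∈ F.support, m 0 ≤ m' 0) (σ : R) :
    (heightPoly F σ).natDegree ≤ m 1 := by
  refine Polynomial.natDegree_le_iff_coeff_eq_zero.2 fun n hn => ?_
  rw [coeff_heightPoly, Finset.sum_eq_zero]
  intro m' hm'n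
  obtain ⟨hm', rfl⟩ := Finset.mem_filter.1 hm'n
  have h := add_mul_eq_of_isWeightedHomogeneous hF hm
  have h' := add_mul_eq_of_isWeightedHomogeneous hF hm'
  have hlt : β * m 1 < β * m' 1 := mul_lt_mul_of_pos_left (Nat.cast_lt.2 hn) hβ
  have hle : (m 0 : ℝ) ≤ m' 0 := Nat.cast_le.2 (hmin m' hm')
  linarith

/-- Every `F(σ, Y)` with `σ ≠ 0` has leading term `σ ^ e * a * Y ^ n`, so that the degree and, for
`σ = 1` and `σ = -1`, the absolute value of the leading coefficient are the same. -/
def HasHeightLeadingTerm (F : MvPolynomial (Fin 2) R) (e n : ℕ) (a : R) : Prop :=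
  ∀ σ ≠ 0, (heightPoly F σ).natDegree = n ∧ (heightPoly F σ).leadingCoeff = σ ^ e * a

theorem exists_hasHeightLeadingTerm [NoZeroDivisors R] {e : ℕ} (hβ : 0 < β)
    (hF : IsWeightedHomogeneous ![1, β] F d) (he : emultiplicity (X 0) F = e) :
    ∃ (n : ℕ) (a : R), a ≠ 0 ∧ β * n = d - e ∧ HasHeightLeadingTerm F e n a := by
  obtain ⟨m, hm, rfl, hmin⟩ := exists_mem_support_eq_of_emultiplicity_X_eq he
  have hcoeff := mem_support_iff.1 hm
  refine ⟨m 1, F.coeff m, hcoeff, ?_, fun σ hσ => ?_⟩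
  · linarith [add_mul_eq_of_isWeightedHomogeneous hF hm]
  have htop := coeff_heightPoly_of_isWeightedHomogeneous hF hm σ
  have hdeg : (heightPoly F σ).natDegree = m 1 :=
    Polynomial.natDegree_eq_of_le_of_coeff_ne_zero (natDegree_heightPoly_le hβ hF hm hmin σ)
      (htop ▸ mul_ne_zero (pow_ne_zero _ hσ) hcoeff)
  exact ⟨hdeg, by rw [Polynomial.leadingCoeff, hdeg, htop]⟩

end HeightPoly

section Asymptotics

variable {𝕜 : Type*} [NormedField 𝕜]

theorem tendsto_eval_div_pow_natDegree (p : Polynomial 𝕜) :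
    Tendsto (fun t => p.eval t / t ^ p.natDegree) (cobounded 𝕜) (𝓝 p.leadingCoeff) := by
  have hequiv := (Polynomial.isEquivalent_cobounded_leading_monomial (P := p)).div
    (Asymptotics.IsEquivalent.refl (u := fun t : 𝕜 => t ^ p.natDegree))
  refine hequiv.symm.tendsto_nhds (tendsto_const_nhds.congr' ?_)
  filter_upwards [eventually_ne_cobounded 0] with t ht
  simp [ht]

theorem mul_leadingCoeff_mul_pow_eq_of_eval_comp {p q : Polynomial 𝕜}
    (hdeg : q.natDegree = p.natDegree) {ℱ : Filter 𝕜} [ℱ.NeBot] (hℱ : ℱ ≤ cobounded 𝕜)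
    {φ : 𝕜 → 𝕜} (hφ : Tendsto φ ℱ (cobounded 𝕜)) {c L : 𝕜}
    (hpq : ∀ᶠ t in ℱ, c * q.eval (φ t) = p.eval t) (hL : Tendsto (fun t => φ t / t) ℱ (𝓝 L)) :
    c * (q.leadingCoeff * L ^ p.natDegree) = p.leadingCoeff := by
  have hq := ((tendsto_eval_div_pow_natDegree q).comp hφ).mul (hL.pow p.natDegree)
  refine tendsto_nhds_unique (hq.const_mul c)
    (((tendsto_eval_div_pow_natDegree p).mono_left hℱ).congr' ?_)
  filter_upwards [hφ.eventually (eventually_ne_cobounded 0), hpq] with t ht hpqt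
  rw [Function.comp_apply, hdeg, div_pow, ← hpqt]
  field_simp

end Asymptotics

theorem tendsto_cobounded_of_lipschitzWith_invFun {α γ : Type*} [Nonempty α] [PseudoMetricSpace α]
    [PseudoMetricSpace γ] {f : α → γ} (hf : Function.Injective f)
    {K : NNReal} (hinv : LipschitzWith K (Function.invFun f)) :
    Tendsto f (cobounded α) (cobounded γ) :=
  (hinv.to_rightInverse (Function.leftInverse_invFun hf)).tendsto_cobounded

theorem rpow_div_mul_eq_of_pow_mul_pow_eq {a b x y : ℝ} (ha : 0 ≤ a) (hb : 0 ≤ b) (hx : 0 ≤ x)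
    (hy : 0 ≤ y) {d n : ℕ} (hn : n ≠ 0) (h : a ^ d * x ^ n = b ^ d * y ^ n) :
    a ^ ((d : ℝ) / n) * x = b ^ ((d : ℝ) / n) * y := by
  have hroot (u v : ℝ) (hu : 0 ≤ u) (hv : 0 ≤ v) :
      (u ^ d * v ^ n) ^ (n : ℝ)⁻¹ = u ^ ((d : ℝ) / n) * v := by
    rw [Real.mul_rpow (by positivity) (by positivity), Real.pow_rpow_inv_natCast hv hn,
      ← Real.rpow_natCast_mul hu, div_eq_mul_inv]
  rw [← hroot a x ha hx, h, hroot b y hb hy]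

section Heights

variable {d e n : ℕ} {β : ℝ} {F G : MvPolynomial (Fin 2) ℝ} {ℱ : Filter ℝ} [ℱ.NeBot]

theorem isWeightedHomogeneous_of_eval2_rpow_mul {t : ℝ} (ht : 0 < t) (ht1 : t ≠ 1)
    (hF : ∀ x y, eval2 F (t * x) (t ^ β * y) = t ^ d * eval2 F x y) :
    IsWeightedHomogeneous ![1, β] F (d : ℝ) := by
  refine isWeightedHomogeneous_of_eval_rpow_mul ht ht1 fun x => ?_
  obtain ⟨a, b, rfl⟩ : ∃ a b, x = ![a, b] := ⟨x 0, x 1, by ext i; fin_cases i <;> rfl⟩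
  have hscale : (fun i => t ^ (![1, β] : Fin 2 → ℝ) i * ![a, b] i) = ![t * a, t ^ β * b] := by
    ext i; fin_cases i <;> simp
  rw [hscale, Real.rpow_natCast]
  exact hF a b

theorem abs_mul_abs_pow_mul_abs_eq_of_eval2_comp {a b : ℝ}
    (hF : HasHeightLeadingTerm F e n a) (hG : HasHeightLeadingTerm G e n b)
    (hℱ : ℱ ≤ cobounded ℝ) {c σ τ L : ℝ} (hσ : |σ| = 1) (hτ : |τ| = 1) {φ : ℝ → ℝ}
    (hφ : Tendsto φ ℱ (cobounded ℝ)) (h : ∀ t, c * eval2 G τ (φ t) = eval2 F σ t)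
    (hL : Tendsto (fun t => φ t / t) ℱ (𝓝 L)) :
    |c| * |L| ^ n * |b| = |a| := by
  obtain ⟨hdegF, hlcF⟩ := hF σ (by rintro rfl; simp at hσ)
  obtain ⟨hdegG, hlcG⟩ := hG τ (by rintro rfl; simp at hτ)
  have hlead := congrArg abs <| mul_leadingCoeff_mul_pow_eq_of_eval_comp (hdegG.trans hdegF.symm)
    hℱ hφ (.of_forall <| by simpa only [eval_heightPoly] using h) hL
  simp only [hdegF, hlcF, hlcG, abs_mul, abs_pow, hσ, hτ, one_pow, one_mul] at hlead
  rw [← hlead]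
  ring

theorem stmt_15_general (hβ : 0 < β) (hed : e < d)
    (hF : IsWeightedHomogeneous ![1, β] F (d : ℝ)) (hG : IsWeightedHomogeneous ![1, β] G (d : ℝ))
    (heF : emultiplicity (X 0) F = e) (heG : emultiplicity (X 0) G = e) (hℱ : ℱ ≤ cobounded ℝ)
    {l1 l2 σ1 σ2 τ1 τ2 L1 L2 : ℝ} (hσ1 : |σ1| = 1) (hσ2 : |σ2| = 1) (hτ1 : |τ1| = 1)
    (hτ2 : |τ2| = 1) {φ1 φ2 : ℝ → ℝ}
    (hφ1 : Tendsto φ1 ℱ (cobounded ℝ)) (hφ2 : Tendsto φ2 ℱ (cobounded ℝ))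
    (h1 : ∀ t, |l1| ^ d * eval2 G τ1 (φ1 t) = eval2 F σ1 t)
    (h2 : ∀ t, |l2| ^ d * eval2 G τ2 (φ2 t) = eval2 F σ2 t)
    (hL1 : Tendsto (fun t => φ1 t / t) ℱ (𝓝 L1)) (hL2 : Tendsto (fun t => φ2 t / t) ℱ (𝓝 L2)) :
    |l1| ^ (d * β / (d - e)) * |L1| = |l2| ^ (d * β / (d - e)) * |L2| := by
  obtain ⟨n, a, -, hn, hFa⟩ := exists_hasHeightLeadingTerm hβ hF heF
  obtain ⟨n', b, hb, hn', hGb⟩ := exists_hasHeightLeadingTerm hβ hG heG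
  obtain rfl : n' = n := Nat.cast_injective (mul_left_cancel₀ hβ.ne' (hn'.trans hn.symm))
  have hn0 : n' ≠ 0 := by
    rintro rfl
    exact hed.ne' (by simpa [sub_eq_zero, eq_comm] using hn)
  have hlead : |l1| ^ d * |L1| ^ n' = |l2| ^ d * |L2| ^ n' := by
    have hlead1 := abs_mul_abs_pow_mul_abs_eq_of_eval2_comp hFa hGb hℱ hσ1 hτ1 hφ1 h1 hL1
    have hlead2 := abs_mul_abs_pow_mul_abs_eq_of_eval2_comp hFa hGb hℱ hσ2 hτ2 hφ2 h2 hL2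
    simp only [abs_pow, abs_abs] at hlead1 hlead2
    exact mul_right_cancel₀ (abs_ne_zero.2 hb) (hlead1.trans hlead2.symm)
  have hexp : (d * β / (d - e) : ℝ) = d / n' := by
    rw [← hn, mul_comm β, mul_div_mul_right _ _ hβ.ne']
  rw [hexp]
  exact rpow_div_mul_eq_of_pow_mul_pow_eq (abs_nonneg _) (abs_nonneg _) (abs_nonneg _)
    (abs_nonneg _) hn0 hlead

end Heights

/-- If the height functions of two β-quasihomogeneous polynomials `F, G` of degree
`d ≥ 1`, both with multiplicity `e < d` of `X` as a factor, are related by a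
proto-transition `(λ, φ)` whose components have limits `φᵢ(t)/t → Lᵢ`, then
`|λ₁|^{dβ/(d−e)}·|L₁| = |λ₂|^{dβ/(d−e)}·|L₂|`. -/
theorem stmt_15 (r s d e : ℕ) (hrs : s < r) (hs : 0 < s) (hgcd : Nat.gcd r s = 1)
    (hd : 1 ≤ d) (hed : e < d) (β : ℝ) (hβ : β = (r : ℝ) / (s : ℝ))
    (F G : MvPolynomial (Fin 2) ℝ)
    (hF : ∀ t x y : ℝ, 0 < t → eval2 F (t * x) (t ^ β * y) = t ^ d * eval2 F x y)
    (hG : ∀ t x y : ℝ, 0 < t → eval2 G (t * x) (t ^ β * y) = t ^ d * eval2 G x y)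
    (heF : (MvPolynomial.X 0 : MvPolynomial (Fin 2) ℝ) ^ e ∣ F ∧
      ¬ (MvPolynomial.X 0 : MvPolynomial (Fin 2) ℝ) ^ (e + 1) ∣ F)
    (heG : (MvPolynomial.X 0 : MvPolynomial (Fin 2) ℝ) ^ e ∣ G ∧
      ¬ (MvPolynomial.X 0 : MvPolynomial (Fin 2) ℝ) ^ (e + 1) ∣ G)
    (l1 l2 : ℝ) (hl1 : l1 ≠ 0) (hl2 : l2 ≠ 0) (hll : 0 < l1 * l2)
    (φ1 φ2 : ℝ → ℝ)
    (hφ1bij : Function.Bijective φ1) (hφ1lip : ∃ K : NNReal, LipschitzWith K φ1)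
    (hφ1inv : ∃ K : NNReal, LipschitzWith K (Function.invFun φ1))
    (hφ2bij : Function.Bijective φ2) (hφ2lip : ∃ K : NNReal, LipschitzWith K φ2)
    (hφ2inv : ∃ K : NNReal, LipschitzWith K (Function.invFun φ2))
    (hpos : 0 < l1 → 0 < l2 →
      (∀ t : ℝ, |l1| ^ d * eval2 G 1 (φ1 t) = eval2 F 1 t) ∧
      (∀ t : ℝ, |l2| ^ d * eval2 G (-1) (φ2 t) = eval2 F (-1) t))
    (hneg : l1 < 0 → l2 < 0 →
      (∀ t : ℝ, |l1| ^ d * eval2 G (-1) (φ1 t) = eval2 F 1 t) ∧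
      (∀ t : ℝ, |l2| ^ d * eval2 G 1 (φ2 t) = eval2 F (-1) t))
    (L1 L2 : ℝ)
    (hL1top : Tendsto (fun t => φ1 t / t) atTop (𝓝 L1))
    (hL1bot : Tendsto (fun t => φ1 t / t) atBot (𝓝 L1))
    (hL2top : Tendsto (fun t => φ2 t / t) atTop (𝓝 L2))
    (hL2bot : Tendsto (fun t => φ2 t / t) atBot (𝓝 L2)) :
    |l1| ^ ((d : ℝ) * β / ((d : ℝ) - (e : ℝ))) * |L1| =
      |l2| ^ ((d : ℝ) * β / ((d : ℝ) - (e : ℝ))) * |L2| := by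
  have hβ0 : 0 < β := hβ ▸ div_pos (Nat.cast_pos.2 (hs.trans hrs)) (Nat.cast_pos.2 hs)
  have hFw : MvPolynomial.IsWeightedHomogeneous ![1, β] F (d : ℝ) :=
    isWeightedHomogeneous_of_eval2_rpow_mul two_pos (by norm_num) fun x y => hF 2 x y two_pos
  have hGw : MvPolynomial.IsWeightedHomogeneous ![1, β] G (d : ℝ) :=
    isWeightedHomogeneous_of_eval2_rpow_mul two_pos (by norm_num) fun x y => hG 2 x y two_pos
  obtain ⟨τ, hτ, h1, h2⟩ : ∃ τ : ℝ, |τ| = 1 ∧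
      (∀ t, |l1| ^ d * eval2 G τ (φ1 t) = eval2 F 1 t) ∧
      (∀ t, |l2| ^ d * eval2 G (-τ) (φ2 t) = eval2 F (-1) t) := by
    rcases pos_and_pos_or_neg_and_neg_of_mul_pos hll with ⟨h1, h2⟩ | ⟨h1, h2⟩
    · exact ⟨1, abs_one, hpos h1 h2⟩
    · exact ⟨-1, by simp, by simpa only [neg_neg] using hneg h1 h2⟩
  have hcob : (atTop : Filter ℝ) ≤ cobounded ℝ := IsOrderBornology.atTop_le_cobounded
  have hφ1 := tendsto_cobounded_of_lipschitzWith_invFun hφ1bij.1 hφ1inv.choose_spec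
  have hφ2 := tendsto_cobounded_of_lipschitzWith_invFun hφ2bij.1 hφ2inv.choose_spec
  exact stmt_15_general hβ0 hed hFw hGw (emultiplicity_eq_coe.2 heF) (emultiplicity_eq_coe.2 heG)
    hcob abs_one (by simp) hτ (by simpa using hτ)
    (hφ1.mono_left hcob) (hφ2.mono_left hcob) h1 h2 hL1top hL2top
end

section
/- Let β = r/s be a rational number with r > s > 0 and gcd(r, s) = 1, and let F, G ∈ ℝ[X, Y] be β-quasihomogeneous polynomials of degree d ≥ 1, neither of which is a scalar multiple of X^d, with height functions f₊, f₋ and g₊, g₋. Suppose there exist nonzero real numbers λ₁, λ₂ with λ₁λ₂ > 0 and bi-Lipschitz homeomorphisms φ₁, φ₂ : ℝ → ℝ such that: if λ₁ > 0 and λ₂ > 0 then |λ₁|^d·(g₊ ∘ φ₁) = f₊ and |λ₂|^d·(g₋ ∘ φ₂) = f₋, while if λ₁ < 0 and λ₂ < 0 then |λ₁|^d·(g₋ ∘ φ₁) = f₊ and |λ₂|^d·(g₊ ∘ φ₂) = f₋. If r is even or s is odd, then there exist nonzero real numbers λ̃₁, λ̃₂ with λ̃₁λ̃₂ > 0, bi-Lipschitz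 homeomorphisms φ̃₁, φ̃₂ : ℝ → ℝ satisfying the same sign-dependent height-function equations (with λ̃ᵢ, φ̃ᵢ in place of λᵢ, φᵢ), and real numbers L̃₁, L̃₂ with φ̃ᵢ(t)/t → L̃ᵢ as |t| → +∞ and |λ̃₁|^β·L̃₁ = |λ̃₂|^β·L̃₂. -/
open Filter Topology

/-!
For odd `s`, the identity `F (τ ^ s * x, τ ^ r * y) = τ ^ (s * d) * F (x, y)` is polynomial in `τ`,
so it extends from `τ > 0` to `τ = -1`, where it expresses `f₋` through `f₊`. Hence a bi-Lipschitz
`φ` relating one pair of height functions gives, with `ε = (-1) ^ r` and the same multiplier, the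
map `t ↦ ε * φ (ε * t)` relating the other pair, and both maps have the same asymptotic slope. That
slope exists: comparing leading terms in `Q (φ t) = P t` forces `deg P = deg Q = n` and shows that
`(φ t / t) ^ n` converges, while the monotonicity of `φ` fixes the sign of `φ t / t`.
-/

open Bornology Asymptotics Polynomial
open scoped NNReal

section BiLipschitz

variable {X Y Z : Type*} [PseudoEMetricSpace X] [PseudoEMetricSpace Y] [PseudoEMetricSpace Z]

/-- A bi-Lipschitz homeomorphism. Lipschitz continuity of the inverse is encoded as
`AntilipschitzWith`, so that no inverse has to be chosen; see
`isBiLipschitzHomeo_iff_lipschitzWith_invFun`. -/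
structure IsBiLipschitzHomeo (f : X → Y) : Prop where
  bijective : Function.Bijective f
  exists_lipschitzWith : ∃ K : ℝ≥0, LipschitzWith K f
  exists_antilipschitzWith : ∃ K : ℝ≥0, AntilipschitzWith K f

theorem isBiLipschitzHomeo_iff_lipschitzWith_invFun [Nonempty X] {f : X → Y} :
    IsBiLipschitzHomeo f ↔ Function.Bijective f ∧ (∃ K : ℝ≥0, LipschitzWith K f) ∧
      ∃ K : ℝ≥0, LipschitzWith K (Function.invFun f) :=
  ⟨fun ⟨hbij, hlip, K, hK⟩ =>
    ⟨hbij, hlip, K, hK.to_rightInverse (Function.rightInverse_invFun hbij.surjective)⟩,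
  fun ⟨hbij, hlip, K, hK⟩ =>
    ⟨hbij, hlip, K, hK.to_rightInverse (Function.leftInverse_invFun hbij.injective)⟩⟩

theorem IsBiLipschitzHomeo.comp {g : Y → Z} {f : X → Y} (hg : IsBiLipschitzHomeo g)
    (hf : IsBiLipschitzHomeo f) : IsBiLipschitzHomeo (g ∘ f) where
  bijective := hg.bijective.comp hf.bijective
  exists_lipschitzWith :=
    let ⟨_, hKg⟩ := hg.exists_lipschitzWith
    let ⟨_, hKf⟩ := hf.exists_lipschitzWith
    ⟨_, hKg.comp hKf⟩
  exists_antilipschitzWith :=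
    let ⟨_, hKg⟩ := hg.exists_antilipschitzWith
    let ⟨_, hKf⟩ := hf.exists_antilipschitzWith
    ⟨_, hKg.comp hKf⟩

theorem isBiLipschitzHomeo_mul_left {𝕜 : Type*} [NormedField 𝕜] {a : 𝕜} (ha : a ≠ 0) :
    IsBiLipschitzHomeo (a * ·) where
  bijective := mulLeft_bijective₀ a ha
  exists_lipschitzWith := ⟨_, lipschitzWith_smul a⟩
  exists_antilipschitzWith := ⟨_, antilipschitzWith_mul_left ha⟩

end BiLipschitz

section LinearGrowth

variable {E F : Type*} [NormedAddCommGroup E] [NormedAddCommGroup F] {K : ℝ≥0} {f : E → F}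

theorem isBigO_cobounded_id_of_lipschitzWith (hf : LipschitzWith K f) :
    f =O[cobounded E] id := by
  have hsub : (fun x => f x - f 0) =O[cobounded E] id :=
    .of_bound K (.of_forall fun x => by simpa [dist_eq_norm] using hf.dist_le_mul x 0)
  simpa only [sub_add_cancel] using hsub.add (isLittleO_const_id_cobounded (f 0)).isBigO

theorem id_isBigO_cobounded_of_antilipschitzWith (hf : AntilipschitzWith K f) :
    id =O[cobounded E] f := by
  have hsub : id =O[cobounded E] fun x => f x - f 0 :=
    .of_bound K (.of_forall fun x => by simpa [dist_eq_norm] using hf.le_mul_dist x 0)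
  have hconst : (fun _ => f 0) =O[cobounded E] f :=
    ((isLittleO_const_id_cobounded (f 0)).comp_tendsto hf.tendsto_cobounded).isBigO
  exact hsub.trans ((isBigO_refl f _).sub hconst)

theorem IsBiLipschitzHomeo.isTheta_cobounded_id (hf : IsBiLipschitzHomeo f) :
    f =Θ[cobounded E] id :=
  let ⟨_, hlip⟩ := hf.exists_lipschitzWith
  let ⟨_, hanti⟩ := hf.exists_antilipschitzWith
  ⟨isBigO_cobounded_id_of_lipschitzWith hlip, id_isBigO_cobounded_of_antilipschitzWith hanti⟩

theorem tendsto_cobounded_of_isTheta_id (hf : f =Θ[cobounded E] id) :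
    Tendsto f (cobounded E) (cobounded F) :=
  tendsto_norm_atTop_iff_cobounded.1 (hf.tendsto_norm_atTop_iff.2 tendsto_norm_cobounded_atTop)

end LinearGrowth

section PolynomialConjugacy

theorem ne_zero_of_eval_comp_eq {R : Type*} [CommRing R] [IsDomain R] [Infinite R] {P Q : R[X]}
    {φ : R → R} (hP : P ≠ 0) (h : ∀ t, Q.eval (φ t) = P.eval t) : Q ≠ 0 := by
  rintro rfl
  exact hP (Polynomial.funext fun t => by simp [← h t])

theorem isTheta_eval_pow_natDegree_cobounded {𝕜 : Type*} [NormedField 𝕜] {P : 𝕜[X]}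
    (hP : P ≠ 0) :
    (fun t => P.eval t) =Θ[cobounded 𝕜] fun t => t ^ P.natDegree :=
  isEquivalent_cobounded_leading_monomial.isTheta.trans
    ((isTheta_const_mul_left (leadingCoeff_ne_zero.2 hP)).2 (isTheta_refl _ _))

variable {𝕜 : Type*} [NontriviallyNormedField 𝕜] {P Q : 𝕜[X]} {φ : 𝕜 → 𝕜}

theorem eq_of_pow_isTheta_pow_cobounded {m n : ℕ}
    (h : (fun t : 𝕜 => t ^ m) =Θ[cobounded 𝕜] fun t => t ^ n) : m = n := by
  have frequently_pow_ne_zero (k : ℕ) : ∃ᶠ t : 𝕜 in cobounded 𝕜, t ^ k ≠ 0 :=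
    ((eventually_ne_cobounded 0).mono fun t ht => pow_ne_zero k ht).frequently
  rcases lt_trichotomy m n with hlt | heq | hlt
  · exact absurd h.2 ((isLittleO_pow_pow_cobounded_of_lt hlt).not_isBigO (frequently_pow_ne_zero m))
  · exact heq
  · exact absurd h.1 ((isLittleO_pow_pow_cobounded_of_lt hlt).not_isBigO (frequently_pow_ne_zero n))

theorem natDegree_eq_of_eval_comp_eq (hP : P ≠ 0) (hφ : φ =Θ[cobounded 𝕜] id)
    (h : ∀ t, Q.eval (φ t) = P.eval t) : P.natDegree = Q.natDegree := by
  have hQ := isTheta_eval_pow_natDegree_cobounded (ne_zero_of_eval_comp_eq hP h)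
  have htend := tendsto_cobounded_of_isTheta_id hφ
  have hQφ : (fun t => Q.eval (φ t)) =Θ[cobounded 𝕜] fun t => φ t ^ Q.natDegree :=
    ⟨hQ.1.comp_tendsto htend, hQ.2.comp_tendsto htend⟩
  refine eq_of_pow_isTheta_pow_cobounded (𝕜 := 𝕜) ?_
  calc (fun t => t ^ P.natDegree)
    _ =Θ[cobounded 𝕜] fun t => P.eval t := (isTheta_eval_pow_natDegree_cobounded hP).symm
    _ =Θ[cobounded 𝕜] fun t => Q.eval (φ t) := by simp only [h]; exact isTheta_refl _ _
    _ =Θ[cobounded 𝕜] fun t => φ t ^ Q.natDegree := hQφ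
    _ =Θ[cobounded 𝕜] fun t => t ^ Q.natDegree := hφ.pow _

theorem tendsto_div_pow_cobounded_of_eval_comp_eq (hP : P ≠ 0) (hφ : φ =Θ[cobounded 𝕜] id)
    (h : ∀ t, Q.eval (φ t) = P.eval t) :
    Tendsto (fun t => (φ t / t) ^ P.natDegree) (cobounded 𝕜)
      (𝓝 (P.leadingCoeff / Q.leadingCoeff)) := by
  set n := P.natDegree with hn
  set a := P.leadingCoeff
  set b := Q.leadingCoeff
  have hb : b ≠ 0 := leadingCoeff_ne_zero.2 (ne_zero_of_eval_comp_eq hP h)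
  have hP_equiv : (fun t => P.eval t) ~[cobounded 𝕜] fun t => a * t ^ n :=
    isEquivalent_cobounded_leading_monomial
  have hQ_equiv : (fun t => P.eval t) ~[cobounded 𝕜] fun t => b * φ t ^ n := by
    have hcomp := (isEquivalent_cobounded_leading_monomial (P := Q)).comp_tendsto
      (tendsto_cobounded_of_isTheta_id hφ)
    simpa only [Function.comp_def, h, ← natDegree_eq_of_eval_comp_eq hP hφ h, ← hn] using hcomp
  have hquot : (fun t => a * t ^ n / (b * t ^ n)) ~[cobounded 𝕜]
      fun t => b * φ t ^ n / (b * t ^ n) :=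
    (hP_equiv.symm.trans hQ_equiv).div .refl
  have hconst : (fun _ => a / b) =ᶠ[cobounded 𝕜] fun t => a * t ^ n / (b * t ^ n) := by
    filter_upwards [eventually_ne_cobounded 0] with t ht
    rw [mul_div_mul_right a b (pow_ne_zero n ht)]
  refine (hquot.tendsto_nhds (tendsto_const_nhds.congr' hconst)).congr fun t => ?_
  rw [mul_div_mul_left _ _ hb, div_pow]

theorem tendsto_norm_div_cobounded_of_eval_comp_eq (hP : 0 < P.natDegree)
    (hφ : φ =Θ[cobounded 𝕜] id) (h : ∀ t, Q.eval (φ t) = P.eval t) :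
    Tendsto (fun t => ‖φ t / t‖) (cobounded 𝕜)
      (𝓝 (‖P.leadingCoeff / Q.leadingCoeff‖ ^ (P.natDegree⁻¹ : ℝ))) := by
  have hpow := (tendsto_div_pow_cobounded_of_eval_comp_eq (ne_zero_of_natDegree_gt hP) hφ h).norm
  refine (hpow.rpow_const (Or.inr (by positivity))).congr fun t => ?_
  rw [norm_pow, Real.pow_rpow_inv_natCast (norm_nonneg _) hP.ne']

end PolynomialConjugacy

section AsymptoticSlope

variable {φ : ℝ → ℝ} {L : ℝ}

theorem eventually_div_nonneg_cobounded_of_monotone (hφ : Monotone φ) {a : ℝ} (ha : φ a = 0) :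
    ∀ᶠ t in cobounded ℝ, 0 ≤ φ t / t := by
  rw [IsOrderBornology.cobounded_eq, eventually_sup]
  constructor
  · filter_upwards [eventually_le_atBot a, eventually_le_atBot 0] with t hta ht
    exact div_nonneg_of_nonpos (ha ▸ hφ hta) ht
  · filter_upwards [eventually_ge_atTop a, eventually_ge_atTop 0] with t hta ht
    exact div_nonneg (ha ▸ hφ hta) ht

theorem exists_tendsto_div_of_tendsto_norm_div (hcont : Continuous φ) (hbij : Function.Bijective φ)
    (hL : Tendsto (fun t => ‖φ t / t‖) (cobounded ℝ) (𝓝 L)) :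
    ∃ M, Tendsto (fun t => φ t / t) (cobounded ℝ) (𝓝 M) := by
  obtain ⟨a, ha⟩ := hbij.surjective 0
  rcases hcont.strictMono_of_inj hbij.injective with hmono | hanti
  · refine ⟨L, hL.congr' ?_⟩
    filter_upwards [eventually_div_nonneg_cobounded_of_monotone hmono.monotone ha] with t ht
    exact Real.norm_of_nonneg ht
  · refine ⟨-L, hL.neg.congr' ?_⟩
    filter_upwards [eventually_div_nonneg_cobounded_of_monotone hanti.antitone.neg
      (neg_eq_zero.2 ha)] with t ht
    have ht' : 0 ≤ -(φ t / t) := by simpa only [Pi.neg_apply, neg_div] using ht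
    rw [Real.norm_of_nonpos (neg_nonneg.1 ht'), neg_neg]

theorem exists_tendsto_div_of_eval_comp_eq {P Q : ℝ[X]} (hP : 0 < P.natDegree)
    (hφ : IsBiLipschitzHomeo φ) (h : ∀ t, Q.eval (φ t) = P.eval t) :
    ∃ M, Tendsto (fun t => φ t / t) (cobounded ℝ) (𝓝 M) :=
  let ⟨_, hlip⟩ := hφ.exists_lipschitzWith
  exists_tendsto_div_of_tendsto_norm_div hlip.continuous hφ.bijective
    (tendsto_norm_div_cobounded_of_eval_comp_eq hP hφ.isTheta_cobounded_id h)

end AsymptoticSlope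

theorem tendsto_inv_mul_comp_mul_div_cobounded {𝕜 : Type*} [NormedField 𝕜] {φ : 𝕜 → 𝕜} {a L : 𝕜}
    (ha : a ≠ 0) (hφ : Tendsto (fun t => φ t / t) (cobounded 𝕜) (𝓝 L)) :
    Tendsto (fun t => a⁻¹ * φ (a * t) / t) (cobounded 𝕜) (𝓝 L) := by
  refine (hφ.comp (tendsto_mul_left_cobounded ha)).congr fun t => ?_
  rw [Function.comp_apply, inv_mul_eq_div, div_div]

section Quasihomogeneous

/-- The restriction of `F` to the polynomial curve `t ↦ (A t, B t)`. -/
noncomputable def curveRestriction (F : MvPolynomial (Fin 2) ℝ) (A B : ℝ[X]) : ℝ[X] :=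
  MvPolynomial.aeval ![A, B] F

theorem eval_curveRestriction (F : MvPolynomial (Fin 2) ℝ) (A B : ℝ[X]) (t : ℝ) :
    (curveRestriction F A B).eval t = eval2 F (A.eval t) (B.eval t) := by
  unfold curveRestriction eval2
  rw [MvPolynomial.aeval_def, MvPolynomial.polynomial_eval_eval₂, ← MvPolynomial.eval₂_id]
  congr 1
  · ext x
    simp
  · ext i
    fin_cases i <;> simp

/-- The polynomial whose evaluation is the height function `t ↦ F (x, t)`; the height functions
`f₊` and `f₋` of the paper are the cases `x = 1` and `x = -1`. -/
noncomputable def heightPolynomial (F : MvPolynomial (Fin 2) ℝ) (x : ℝ) : ℝ[X] :=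
  curveRestriction F (C x) X

@[simp]
theorem eval_heightPolynomial (F : MvPolynomial (Fin 2) ℝ) (x t : ℝ) :
    (heightPolynomial F x).eval t = eval2 F x t := by
  rw [heightPolynomial, eval_curveRestriction, eval_C, eval_X]

/-- `β`-quasihomogeneity of degree `d`, for polynomials in two variables. -/
def IsQuasihomogeneous (β : ℝ) (d : ℕ) (F : MvPolynomial (Fin 2) ℝ) : Prop :=
  ∀ t x y : ℝ, 0 < t → eval2 F (t * x) (t ^ β * y) = t ^ d * eval2 F x y

namespace IsQuasihomogeneous

variable {r s d : ℕ} {β : ℝ} {F G : MvPolynomial (Fin 2) ℝ}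

theorem natDegree_heightPolynomial_one_pos (hF : IsQuasihomogeneous β d F)
    (hFX : ∀ c : ℝ, F ≠ MvPolynomial.C c * MvPolynomial.X 0 ^ d) :
    0 < (heightPolynomial F 1).natDegree := by
  by_contra hdeg
  obtain ⟨c, hc⟩ := natDegree_eq_zero.mp (Nat.eq_zero_of_not_pos hdeg)
  have hconst (t : ℝ) : eval2 F 1 t = c := by
    rw [← eval_heightPolynomial, ← hc, eval_C]
  refine hFX c (MvPolynomial.funext_set (fun _ => Set.Ioi 0) (fun _ => Set.Ioi_infinite 0) ?_)
  intro v hv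
  have hv0 : 0 < v 0 := hv 0 trivial
  have hv_eta : ![v 0, v 1] = v := by
    ext i
    fin_cases i <;> rfl
  have hscale := hF (v 0) 1 (v 1 / v 0 ^ β) hv0
  rw [mul_div_cancel₀ _ (Real.rpow_pos_of_pos hv0 β).ne', hconst, mul_one, eval2, hv_eta] at hscale
  rw [hscale]
  simp [mul_comm]

theorem eval2_pow_mul_pow_mul (hF : IsQuasihomogeneous (r / s) d F) (hs : s ≠ 0) (τ x y : ℝ) :
    eval2 F (τ ^ s * x) (τ ^ r * y) = (τ ^ s) ^ d * eval2 F x y := by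
  have hpoly : curveRestriction F (X ^ s * C x) (X ^ r * C y)
      = (X ^ s) ^ d * C (eval2 F x y) := by
    refine eq_of_infinite_eval_eq _ _ ((Set.Ioi_infinite (0 : ℝ)).mono fun t ht => ?_)
    have ht0 : 0 < t := ht
    have hpow : (t ^ s) ^ ((r : ℝ) / s) = t ^ r := by
      rw [← Real.rpow_natCast_mul ht0.le, mul_div_cancel₀ _ (Nat.cast_ne_zero.2 hs),
        Real.rpow_natCast]
    simpa only [Set.mem_ofPred_eq, eval_curveRestriction, eval_mul, eval_pow, eval_X, eval_C, hpow]
      using hF (t ^ s) x y (pow_pos ht0 s)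
  simpa only [eval_curveRestriction, eval_mul, eval_pow, eval_X, eval_C]
    using congrArg (eval τ) hpoly

theorem eval2_neg (hF : IsQuasihomogeneous (r / s) d F) (hs : Odd s) (x y : ℝ) :
    eval2 F (-x) ((-1) ^ r * y) = (-1) ^ d * eval2 F x y := by
  simpa [hs.neg_one_pow] using hF.eval2_pow_mul_pow_mul hs.pos.ne' (-1) x y

theorem eval2_neg_comp_eq (hF : IsQuasihomogeneous (r / s) d F)
    (hG : IsQuasihomogeneous (r / s) d G) (hs : Odd s) {c x y : ℝ} {φ : ℝ → ℝ}
    (h : ∀ t, c * eval2 G x (φ t) = eval2 F y t) (t : ℝ) :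
    c * eval2 G (-x) (((-1) ^ r)⁻¹ * φ ((-1) ^ r * t)) = eval2 F (-y) t := by
  have hinv : ((-1 : ℝ) ^ r)⁻¹ = (-1) ^ r := by rw [← inv_pow, inv_neg_one]
  have hinvol : (-1 : ℝ) ^ r * ((-1) ^ r * t) = t := by rw [← mul_assoc, ← mul_pow]; simp
  calc c * eval2 G (-x) (((-1) ^ r)⁻¹ * φ ((-1) ^ r * t))
    _ = (-1) ^ d * (c * eval2 G x (φ ((-1) ^ r * t))) := by
      rw [hinv, hG.eval2_neg hs]; ring
    _ = (-1) ^ d * eval2 F y ((-1) ^ r * t) := by rw [h]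
    _ = eval2 F (-y) t := by rw [← hF.eval2_neg hs, hinvol]

theorem exists_tendsto_div_of_eval2_comp_eq (hF : IsQuasihomogeneous β d F)
    (hFX : ∀ c : ℝ, F ≠ MvPolynomial.C c * MvPolynomial.X 0 ^ d) {c x : ℝ} {φ : ℝ → ℝ}
    (hφ : IsBiLipschitzHomeo φ) (h : ∀ t, c * eval2 G x (φ t) = eval2 F 1 t) :
    ∃ L, Tendsto (fun t => φ t / t) (cobounded ℝ) (𝓝 L) :=
  exists_tendsto_div_of_eval_comp_eq (Q := C c * heightPolynomial G x)
    (hF.natDegree_heightPolynomial_one_pos hFX) hφ (by simpa using h)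

end IsQuasihomogeneous

end Quasihomogeneous

theorem odd_of_coprime_of_even_or_odd {r s : ℕ} (hrs : Nat.Coprime r s)
    (h : Even r ∨ Odd s) : Odd s :=
  h.elim (fun hr => (hrs.coprime_dvd_left hr.two_dvd).odd_of_left) id

theorem stmt_18_general {r s d : ℕ} (hs : Odd s) {F G : MvPolynomial (Fin 2) ℝ}
    (hF : IsQuasihomogeneous (r / s) d F) (hG : IsQuasihomogeneous (r / s) d G)
    (hFX : ∀ c : ℝ, F ≠ MvPolynomial.C c * MvPolynomial.X 0 ^ d)
    {l : ℝ} (hl : l ≠ 0) {φ : ℝ → ℝ} (hφ : IsBiLipschitzHomeo φ)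
    (hpos : 0 < l → ∀ t, |l| ^ d * eval2 G 1 (φ t) = eval2 F 1 t)
    (hneg : l < 0 → ∀ t, |l| ^ d * eval2 G (-1) (φ t) = eval2 F 1 t) :
    ∃ (ψ : ℝ → ℝ) (L : ℝ), IsBiLipschitzHomeo ψ ∧
      (0 < l → ∀ t, |l| ^ d * eval2 G (-1) (ψ t) = eval2 F (-1) t) ∧
      (l < 0 → ∀ t, |l| ^ d * eval2 G 1 (ψ t) = eval2 F (-1) t) ∧
      Tendsto (fun t => φ t / t) (cobounded ℝ) (𝓝 L) ∧
      Tendsto (fun t => ψ t / t) (cobounded ℝ) (𝓝 L) := by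
  have hε : (-1 : ℝ) ^ r ≠ 0 := pow_ne_zero r (by norm_num)
  obtain ⟨x, hx⟩ : ∃ x, ∀ t, |l| ^ d * eval2 G x (φ t) = eval2 F 1 t :=
    hl.lt_or_gt.elim (fun hl => ⟨-1, hneg hl⟩) fun hl => ⟨1, hpos hl⟩
  obtain ⟨L, hL⟩ := hF.exists_tendsto_div_of_eval2_comp_eq hFX hφ hx
  refine ⟨fun t => ((-1) ^ r)⁻¹ * φ ((-1) ^ r * t), L, ?_, fun hl => ?_, fun hl => ?_, hL, ?_⟩
  · exact (isBiLipschitzHomeo_mul_left (inv_ne_zero hε)).comp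
      (hφ.comp (isBiLipschitzHomeo_mul_left hε))
  · exact hF.eval2_neg_comp_eq hG hs (hpos hl)
  · simpa only [neg_neg] using hF.eval2_neg_comp_eq hG hs (hneg hl)
  · exact tendsto_inv_mul_comp_mul_div_cobounded hε hL

/-- If the height functions of two β-quasihomogeneous polynomials `F, G` of degree
`d ≥ 1` (neither a scalar multiple of `X^d`) are related by some proto-transition, and
`r` is even or `s` is odd, then they are related by a β-transition, i.e. one with
`|λ̃₁|^β·L̃₁ = |λ̃₂|^β·L̃₂`. -/
theorem stmt_18 (r s d : ℕ) (hrs : s < r) (hs : 0 < s) (hgcd : Nat.gcd r s = 1)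
    (hd : 1 ≤ d) (β : ℝ) (hβ : β = (r : ℝ) / (s : ℝ))
    (hrso : Even r ∨ Odd s)
    (F G : MvPolynomial (Fin 2) ℝ)
    (hF : ∀ t x y : ℝ, 0 < t → eval2 F (t * x) (t ^ β * y) = t ^ d * eval2 F x y)
    (hG : ∀ t x y : ℝ, 0 < t → eval2 G (t * x) (t ^ β * y) = t ^ d * eval2 G x y)
    (hFX : ∀ c : ℝ, F ≠ MvPolynomial.C c * (MvPolynomial.X 0 : MvPolynomial (Fin 2) ℝ) ^ d)
    (hGX : ∀ c : ℝ, G ≠ MvPolynomial.C c * (MvPolynomial.X 0 : MvPolynomial (Fin 2) ℝ) ^ d)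
    (l1 l2 : ℝ) (hl1 : l1 ≠ 0) (hl2 : l2 ≠ 0) (hll : 0 < l1 * l2)
    (φ1 φ2 : ℝ → ℝ)
    (hφ1bij : Function.Bijective φ1) (hφ1lip : ∃ K : NNReal, LipschitzWith K φ1)
    (hφ1inv : ∃ K : NNReal, LipschitzWith K (Function.invFun φ1))
    (hφ2bij : Function.Bijective φ2) (hφ2lip : ∃ K : NNReal, LipschitzWith K φ2)
    (hφ2inv : ∃ K : NNReal, LipschitzWith K (Function.invFun φ2))
    (hpos : 0 < l1 → 0 < l2 →
      (∀ t : ℝ, |l1| ^ d * eval2 G 1 (φ1 t) = eval2 F 1 t) ∧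
      (∀ t : ℝ, |l2| ^ d * eval2 G (-1) (φ2 t) = eval2 F (-1) t))
    (hneg : l1 < 0 → l2 < 0 →
      (∀ t : ℝ, |l1| ^ d * eval2 G (-1) (φ1 t) = eval2 F 1 t) ∧
      (∀ t : ℝ, |l2| ^ d * eval2 G 1 (φ2 t) = eval2 F (-1) t)) :
    ∃ (m1 m2 : ℝ) (ψ1 ψ2 : ℝ → ℝ) (M1 M2 : ℝ),
      m1 ≠ 0 ∧ m2 ≠ 0 ∧ 0 < m1 * m2 ∧
      Function.Bijective ψ1 ∧ (∃ K : NNReal, LipschitzWith K ψ1) ∧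
      (∃ K : NNReal, LipschitzWith K (Function.invFun ψ1)) ∧
      Function.Bijective ψ2 ∧ (∃ K : NNReal, LipschitzWith K ψ2) ∧
      (∃ K : NNReal, LipschitzWith K (Function.invFun ψ2)) ∧
      (0 < m1 → 0 < m2 →
        (∀ t : ℝ, |m1| ^ d * eval2 G 1 (ψ1 t) = eval2 F 1 t) ∧
        (∀ t : ℝ, |m2| ^ d * eval2 G (-1) (ψ2 t) = eval2 F (-1) t)) ∧
      (m1 < 0 → m2 < 0 →
        (∀ t : ℝ, |m1| ^ d * eval2 G (-1) (ψ1 t) = eval2 F 1 t) ∧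
        (∀ t : ℝ, |m2| ^ d * eval2 G 1 (ψ2 t) = eval2 F (-1) t)) ∧
      Tendsto (fun t => ψ1 t / t) atTop (𝓝 M1) ∧
      Tendsto (fun t => ψ1 t / t) atBot (𝓝 M1) ∧
      Tendsto (fun t => ψ2 t / t) atTop (𝓝 M2) ∧
      Tendsto (fun t => ψ2 t / t) atBot (𝓝 M2) ∧
      |m1| ^ β * M1 = |m2| ^ β * M2 := by
  subst hβ
  have hφ1 := isBiLipschitzHomeo_iff_lipschitzWith_invFun.2 ⟨hφ1bij, hφ1lip, hφ1inv⟩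
  have hl2pos (h : 0 < l1) : 0 < l2 := pos_of_mul_pos_right hll h.le
  have hl2neg (h : l1 < 0) : l2 < 0 := neg_of_mul_pos_right hll h.le
  obtain ⟨ψ, L, hψ, hψpos, hψneg, hφL, hψL⟩ :=
    stmt_18_general (odd_of_coprime_of_even_or_odd hgcd hrso) hF hG hFX hl1 hφ1
      (fun h => (hpos h (hl2pos h)).1) (fun h => (hneg h (hl2neg h)).1)
  obtain ⟨hψbij, hψlip, hψinv⟩ := isBiLipschitzHomeo_iff_lipschitzWith_invFun.1 hψ
  rw [IsOrderBornology.cobounded_eq, tendsto_sup] at hφL hψL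
  exact ⟨l1, l1, φ1, ψ, L, L, hl1, hl1, mul_self_pos.2 hl1, hφ1bij, hφ1lip, hφ1inv,
    hψbij, hψlip, hψinv,
    fun h _ => ⟨(hpos h (hl2pos h)).1, hψpos h⟩, fun h _ => ⟨(hneg h (hl2neg h)).1, hψneg h⟩,
    hφL.2, hφL.1, hψL.2, hψL.1, rfl⟩
end
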